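/- arXiv:1511.05321 — 2 statements merged into one kernel-verified Lean document; each statement's English description precedes it below -/
import Mathlib

section
/- Let p, q ∈ ℂ and μ ∈ ℂ with Re μ > 0, and assume θ[p,q](iν) ≠ 0 for every ν with Re ν > 0. Then: w₂[p,q](i/μ) = μ² w₂[−q,p](iμ); w₂'[p,q](i/μ) = −μ⁴ w₂'[−q,p](iμ) − 2μ³ w₂[−q,p](iμ); w₂''[p,q](i/μ) = μ⁶ w₂''[−q,p](iμ) + 6μ⁵ w₂'[−q,p](iμ) + 6μ⁴ w₂[−q,p](iμ); w₂⁽³⁾[p,q](i/μ) = −μ⁸ w₂⁽³⁾[−q,p](iμ) − 12μ⁷ w₂''[−q,p](iμ) − 36μ⁶ w₂'[−q,p](iμ) − 24μ⁵ w₂[−q,p](iμ); w₂⁽⁴⁾[p,q](i/μ) = μ¹⁰ w₂⁽⁴⁾[−q,p](iμ) + 20μ⁹ w₂⁽³⁾[−q,p](iμ) + 120μ⁸ w₂''[−q,p](iμ) + 240μ⁷ w₂'[−q,p](iμ) + 120μ⁶ w₂[−q,p](iμ). -/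
noncomputable section

/-- The theta function with characteristics `θ[p,q](iμ)`. -/
def theta (p q μ : ℂ) : ℂ :=
  ∑' m : ℤ, Complex.exp (-(Real.pi : ℂ) * ((m : ℂ) + p) ^ 2 * μ +
    2 * (Real.pi : ℂ) * Complex.I * ((m : ℂ) + p) * q)

/-- The characteristic derivative `∂qθ[p,q](iμ)`. -/
def thetaQ (p q μ : ℂ) : ℂ :=
  2 * (Real.pi : ℂ) * Complex.I *
    ∑' m : ℤ, ((m : ℂ) + p) * Complex.exp (-(Real.pi : ℂ) * ((m : ℂ) + p) ^ 2 * μ +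
      2 * (Real.pi : ℂ) * Complex.I * ((m : ℂ) + p) * q)

/-- The n-th μ-derivative `∂μⁿθ[p,q](iμ)`, given by its absolutely convergent series. -/
def thetaD (n : ℕ) (p q μ : ℂ) : ℂ :=
  (-(Real.pi : ℂ)) ^ n *
    ∑' m : ℤ, ((m : ℂ) + p) ^ (2 * n) *
      Complex.exp (-(Real.pi : ℂ) * ((m : ℂ) + p) ^ 2 * μ +
        2 * (Real.pi : ℂ) * Complex.I * ((m : ℂ) + p) * q)

/-- The n-th μ-derivative `∂μⁿ∂qθ[p,q](iμ)`, given by its absolutely convergent series. -/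
def thetaQD (n : ℕ) (p q μ : ℂ) : ℂ :=
  2 * Complex.I * (-1 : ℂ) ^ n * (Real.pi : ℂ) ^ (n + 1) *
    ∑' m : ℤ, ((m : ℂ) + p) ^ (2 * n + 1) *
      Complex.exp (-(Real.pi : ℂ) * ((m : ℂ) + p) ^ 2 * μ +
        2 * (Real.pi : ℂ) * Complex.I * ((m : ℂ) + p) * q)

/-- The constant `C(j|n) = (−i)ⁿ n! / (2ʲ (n−2j)! (2j)!!)` with `(2j)!! = 2ʲ j!`. -/
def Ccoef (j n : ℕ) : ℂ :=
  (-Complex.I) ^ n * (n.factorial : ℂ) /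
    ((2 : ℂ) ^ j * ((n - 2 * j).factorial : ℂ) * ((2 : ℂ) ^ j * (j.factorial : ℂ)))

/-- `w₁[p,q](iμ)` of the two-parametric family. -/
def w1 (p q μ : ℂ) : ℂ :=
  -(Complex.I / 2) * theta 0 0 μ * theta 0 (1 / 2) μ * thetaQ p (q + 1 / 2) μ /
    (Complex.exp ((Real.pi : ℂ) * Complex.I * p) * theta p q μ)

/-- `w₂[p,q](iμ)` of the two-parametric family. -/
def w2 (p q μ : ℂ) : ℂ :=
  (Complex.I / 2) * theta (1 / 2) 0 μ * theta 0 (1 / 2) μ *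
    thetaQ (p + 1 / 2) (q + 1 / 2) μ /
    (Complex.exp ((Real.pi : ℂ) * Complex.I * p) * theta p q μ)

/-- `w₃[p,q](iμ)` of the two-parametric family. -/
def w3 (p q μ : ℂ) : ℂ :=
  -(1 / 2 : ℂ) * theta (1 / 2) 0 μ * theta 0 0 μ * thetaQ (p + 1 / 2) q μ / theta p q μ

/-- The conformal factor `F[p,q](iμ)` of the two-parametric family. -/
def Ftwo (Λ p q μ : ℂ) : ℂ :=
  (2 / ((Real.pi : ℂ) * Λ)) * (theta p q μ / thetaQ p q μ) ^ 2

/-- `w₁[q₀](iμ)` of the one-parametric family. -/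
def v1 (q0 μ : ℂ) : ℂ := 1 / (μ + q0) + 2 * thetaD 1 (1 / 2) 0 μ / theta (1 / 2) 0 μ

/-- `w₂[q₀](iμ)` of the one-parametric family. -/
def v2 (q0 μ : ℂ) : ℂ := 1 / (μ + q0) + 2 * thetaD 1 0 0 μ / theta 0 0 μ

/-- `w₃[q₀](iμ)` of the one-parametric family. -/
def v3 (q0 μ : ℂ) : ℂ := 1 / (μ + q0) + 2 * thetaD 1 0 (1 / 2) μ / theta 0 (1 / 2) μ

/-- The conformal factor `F[q₀](iμ) = C(μ+q₀)²` of the one-parametric family. -/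
def Fone (C q0 μ : ℂ) : ℂ := C * (μ + q0) ^ 2

/-- The Seeley–de Witt coefficient `ã₀[p,q](iμ)` of the two-parametric family. -/
def a0two (Λ p q μ : ℂ) : ℂ :=
  4 * Ftwo Λ p q μ ^ 2 * w1 p q μ * w2 p q μ * w3 p q μ

/-- The Seeley–de Witt coefficient `ã₀[q₀](iμ)` of the one-parametric family. -/
def a0one (C q0 μ : ℂ) : ℂ :=
  4 * Fone C q0 μ ^ 2 * v1 q0 μ * v2 q0 μ * v3 q0 μ

/-- The Seeley–de Witt coefficient `ã₂[p,q](iμ)` of the two-parametric family. -/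
def a2two (Λ p q μ : ℂ) : ℂ :=
  -(Ftwo Λ p q μ / 3) * (w1 p q μ ^ 2 + w2 p q μ ^ 2 + w3 p q μ ^ 2) +
  (Ftwo Λ p q μ / 6) *
    ((w1 p q μ ^ 2 * w2 p q μ ^ 2 - deriv (w3 p q) μ ^ 2) / w3 p q μ ^ 2 +
     (w1 p q μ ^ 2 * w3 p q μ ^ 2 - deriv (w2 p q) μ ^ 2) / w2 p q μ ^ 2 +
     (w2 p q μ ^ 2 * w3 p q μ ^ 2 - deriv (w1 p q) μ ^ 2) / w1 p q μ ^ 2) -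
  (Ftwo Λ p q μ / 3) *
    (deriv (w1 p q) μ * deriv (w2 p q) μ / (w1 p q μ * w2 p q μ) +
     deriv (w1 p q) μ * deriv (w3 p q) μ / (w1 p q μ * w3 p q μ) +
     deriv (w2 p q) μ * deriv (w3 p q) μ / (w2 p q μ * w3 p q μ)) +
  (Ftwo Λ p q μ / 3) *
    (iteratedDeriv 2 (w1 p q) μ / w1 p q μ + iteratedDeriv 2 (w2 p q) μ / w2 p q μ +
     iteratedDeriv 2 (w3 p q) μ / w3 p q μ) -
  deriv (Ftwo Λ p q) μ ^ 2 / (2 * Ftwo Λ p q μ) + iteratedDeriv 2 (Ftwo Λ p q) μ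



open Complex in
lemma im_I_mul_aux (ν : ℂ) : (I * ν).im = ν.re := by simp

open Complex in
lemma theta_eq (p q ν : ℂ) : theta p q ν =
    cexp (-Real.pi * p ^ 2 * ν + 2 * Real.pi * I * p * q) *
      jacobiTheta₂ (q + I * p * ν) (I * ν) := by
  unfold theta jacobiTheta₂ jacobiTheta₂_term
  rw [← tsum_mul_left]
  refine tsum_congr fun m => ?_
  rw [← Complex.exp_add]
  congr 1
  linear_combination (-2 * Real.pi * m * p * ν - Real.pi * m ^ 2 * ν) * I_sq

open Complex in
lemma thetaQ_eq (p q ν : ℂ) (hν : 0 < ν.re) : thetaQ p q ν =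
    cexp (-Real.pi * p ^ 2 * ν + 2 * Real.pi * I * p * q) *
      (jacobiTheta₂' (q + I * p * ν) (I * ν) +
        2 * Real.pi * I * p * jacobiTheta₂ (q + I * p * ν) (I * ν)) := by
  have him : 0 < (I * ν).im := by rwa [im_I_mul_aux]
  have h1 := hasSum_jacobiTheta₂_term (q + I * p * ν) him
  have h2 := hasSum_jacobiTheta₂'_term (q + I * p * ν) him
  have h3 := (h2.add (h1.mul_left (2 * Real.pi * I * p))).mul_left
    (cexp (-Real.pi * p ^ 2 * ν + 2 * Real.pi * I * p * q))
  rw [← h3.tsum_eq]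
  unfold thetaQ
  rw [← tsum_mul_left]
  refine tsum_congr fun m => ?_
  have : cexp (-(Real.pi : ℂ) * ((m : ℂ) + p) ^ 2 * ν +
      2 * (Real.pi : ℂ) * Complex.I * ((m : ℂ) + p) * q) =
      cexp (-Real.pi * p ^ 2 * ν + 2 * Real.pi * I * p * q) *
        jacobiTheta₂_term m (q + I * p * ν) (I * ν) := by
    unfold jacobiTheta₂_term
    rw [← Complex.exp_add]
    congr 1
    linear_combination (-2 * Real.pi * m * p * ν - Real.pi * m ^ 2 * ν) * I_sq
  rw [this]
  unfold jacobiTheta₂'_term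
  ring

lemma isOpen_rhp : IsOpen {ν : ℂ | 0 < ν.re} := isOpen_lt continuous_const Complex.continuous_re

open Complex in
lemma theta_diff (p q : ℂ) : DifferentiableOn ℂ (theta p q) {ν : ℂ | 0 < ν.re} := by
  intro ν hν
  have him : 0 < (I * ν).im := by rw [im_I_mul_aux]; exact hν
  have h : theta p q = fun ν => cexp (-Real.pi * p ^ 2 * ν + 2 * Real.pi * I * p * q) *
      jacobiTheta₂ (q + I * p * ν) (I * ν) := funext (theta_eq p q)
  rw [h]
  have h1 := (hasFDerivAt_jacobiTheta₂ (q + I * p * ν) him).differentiableAt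
  have h2 : DifferentiableAt ℂ (fun ν : ℂ => (q + I * p * ν, I * ν)) ν := by fun_prop
  have h3 := DifferentiableAt.comp ν h1 h2
  refine DifferentiableAt.differentiableWithinAt (DifferentiableAt.mul (by fun_prop) h3)

open Complex in
lemma jac'_diff (p q : ℂ) : DifferentiableOn ℂ
    (fun ν => jacobiTheta₂' (q + I * p * ν) (I * ν)) {ν : ℂ | 0 < ν.re} := by
  intro ν hν
  have hν' : 0 < ν.re := hν
  set T := ν.re / 2 with hT
  set R := ‖ν‖ + 1 with hR
  have hU : IsOpen ({w : ℂ | T < w.re} ∩ {w : ℂ | ‖w‖ < R}) :=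
    (isOpen_lt continuous_const Complex.continuous_re).inter
      (isOpen_lt continuous_norm continuous_const)
  have hmem : ν ∈ ({w : ℂ | T < w.re} ∩ {w : ℂ | ‖w‖ < R}) :=
    ⟨by simp only [Set.mem_ofPred_eq]; linarith, by simp only [Set.mem_ofPred_eq]; linarith⟩
  have hT0 : 0 < T := by positivity
  have hs := (summable_pow_mul_jacobiTheta₂_term_bound (‖q‖ + ‖p‖ * R) hT0 1).mul_left
    (2 * Real.pi)
  have hd := differentiableOn_tsum_of_summable_norm
    (F := fun (n : ℤ) (w : ℂ) => jacobiTheta₂'_term n (q + I * p * w) (I * w)) hs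
    (fun n => by unfold jacobiTheta₂'_term jacobiTheta₂_term; fun_prop) hU ?_
  · exact ((hd.differentiableAt (hU.mem_nhds hmem))).differentiableWithinAt
  · rintro n w ⟨hw1, hw2⟩
    refine (norm_jacobiTheta₂'_term_le hT0 (S := ‖q‖ + ‖p‖ * R) ?_ ?_ n).trans (le_of_eq ?_)
    · refine (Complex.abs_im_le_norm _).trans ((norm_add_le _ _).trans ?_)
      rw [norm_mul, norm_mul, norm_I, one_mul]
      have : ‖w‖ ≤ R := le_of_lt hw2
      gcongr
    · rw [im_I_mul_aux]; exact le_of_lt hw1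
    · push_cast; ring

open Complex in
lemma thetaQ_diff (p q : ℂ) : DifferentiableOn ℂ (thetaQ p q) {ν : ℂ | 0 < ν.re} := by
  have hj : DifferentiableOn ℂ (fun ν => jacobiTheta₂ (q + I * p * ν) (I * ν))
      {ν : ℂ | 0 < ν.re} := by
    intro ν hν
    have him : 0 < (I * ν).im := by rw [im_I_mul_aux]; exact hν
    have h1 := (hasFDerivAt_jacobiTheta₂ (q + I * p * ν) him).differentiableAt
    have h2 : DifferentiableAt ℂ (fun ν : ℂ => (q + I * p * ν, I * ν)) ν := by fun_prop
    exact (DifferentiableAt.comp ν h1 h2).differentiableWithinAt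
  refine DifferentiableOn.congr (f := fun ν =>
    cexp (-Real.pi * p ^ 2 * ν + 2 * Real.pi * I * p * q) *
      (jacobiTheta₂' (q + I * p * ν) (I * ν) +
        2 * Real.pi * I * p * jacobiTheta₂ (q + I * p * ν) (I * ν))) ?_
    (fun ν hν => thetaQ_eq p q ν hν)
  exact DifferentiableOn.mul (by fun_prop) ((jac'_diff p q).add (hj.const_mul _))

open Complex in
lemma w2_diff (p q : ℂ) (h : ∀ ν : ℂ, 0 < ν.re → theta p q ν ≠ 0) :
    DifferentiableOn ℂ (w2 p q) {ν : ℂ | 0 < ν.re} := by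
  unfold w2
  refine DifferentiableOn.fun_div ?_ ((theta_diff p q).const_mul _) ?_
  · exact (((theta_diff _ _).const_mul _).mul (theta_diff _ _)).mul (thetaQ_diff _ _)
  · intro ν hν
    exact mul_ne_zero (Complex.exp_ne_zero _) (h ν hν)

lemma inv_re_pos {μ : ℂ} (hμ : 0 < μ.re) : 0 < (1 / μ).re := by
  have : μ ≠ 0 := by rintro rfl; simp at hμ
  rw [one_div, Complex.inv_re]
  exact div_pos hμ (Complex.normSq_pos.mpr this)

open Complex in
lemma theta_inv (p q μ : ℂ) (hμ : 0 < μ.re) : theta p q (1 / μ) =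
    1 / (1 / μ) ^ (1 / 2 : ℂ) * cexp (2 * Real.pi * I * p * q) * theta (-q) p μ := by
  have h0 : μ ≠ 0 := by rintro rfl; simp at hμ
  rw [theta_eq, theta_eq, jacobiTheta₂_functional_equation]
  have e1 : -I * (I * (1 / μ)) = 1 / μ := by linear_combination (-1 / μ) * I_sq
  have e2 : (q + I * p * (1 / μ)) / (I * (1 / μ)) = p + I * -q * μ := by
    field_simp
    linear_combination (q * μ) * I_sq
  have e3 : -1 / (I * (1 / μ)) = I * μ := by
    field_simp
    linear_combination -I_sq
  rw [e1, e2, e3]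
  have e4 : cexp (-Real.pi * p ^ 2 * (1 / μ) + 2 * Real.pi * I * p * q) *
      cexp (-Real.pi * I * (q + I * p * (1 / μ)) ^ 2 / (I * (1 / μ))) =
      cexp (2 * Real.pi * I * p * q) *
        cexp (-Real.pi * (-q) ^ 2 * μ + 2 * Real.pi * I * -q * p) := by
    rw [← Complex.exp_add, ← Complex.exp_add]
    congr 1
    field_simp
    linear_combination (-p ^ 2) * I_sq
  linear_combination (1 / (1 / μ) ^ (1 / 2 : ℂ) * jacobiTheta₂ (p + I * -q * μ) (I * μ)) * e4

open Complex in
lemma thetaQ_inv (p q μ : ℂ) (hμ : 0 < μ.re) : thetaQ p q (1 / μ) =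
    1 / (1 / μ) ^ (1 / 2 : ℂ) * (-I * μ) * cexp (2 * Real.pi * I * p * q) *
      thetaQ (-q) p μ := by
  have h0 : μ ≠ 0 := by rintro rfl; simp at hμ
  rw [thetaQ_eq _ _ _ hμ, thetaQ_eq _ _ _ (inv_re_pos hμ), jacobiTheta₂_functional_equation,
    jacobiTheta₂'_functional_equation]
  have e1 : -I * (I * (1 / μ)) = 1 / μ := by linear_combination (-1 / μ) * I_sq
  have e2 : (q + I * p * (1 / μ)) / (I * (1 / μ)) = p + I * -q * μ := by
    field_simp
    linear_combination (q * μ) * I_sq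
  have e3 : -1 / (I * (1 / μ)) = I * μ := by
    field_simp
    linear_combination -I_sq
  rw [e1, e2, e3]
  have e5 : ∀ x : ℂ, x / (I * (1 / μ)) = x * (-I * μ) := by
    intro x
    field_simp
    linear_combination x * I_sq
  rw [e5 (_ * _)]
  have e4 : cexp (-Real.pi * p ^ 2 * (1 / μ) + 2 * Real.pi * I * p * q) *
      cexp (-Real.pi * I * (q + I * p * (1 / μ)) ^ 2 / (I * (1 / μ))) =
      cexp (2 * Real.pi * I * p * q) *
        cexp (-Real.pi * (-q) ^ 2 * μ + 2 * Real.pi * I * -q * p) := by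
    rw [← Complex.exp_add, ← Complex.exp_add]
    congr 1
    field_simp
    linear_combination (-p ^ 2) * I_sq
  have e6 : (-I * μ) * (jacobiTheta₂' (p + I * -q * μ) (I * μ) -
      2 * Real.pi * I * (q + I * p * (1 / μ)) * jacobiTheta₂ (p + I * -q * μ) (I * μ)) +
      2 * Real.pi * I * p * jacobiTheta₂ (p + I * -q * μ) (I * μ) =
      (-I * μ) * (jacobiTheta₂' (p + I * -q * μ) (I * μ) +
        2 * Real.pi * I * -q * jacobiTheta₂ (p + I * -q * μ) (I * μ)) := by
    generalize jacobiTheta₂ (p + I * -q * μ) (I * μ) = J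
    field_simp
    linear_combination (2 * Real.pi * p * J) * I_sq
  linear_combination (1 / (1 / μ) ^ (1 / 2 : ℂ) *
    ((-I * μ) * (jacobiTheta₂' (p + I * -q * μ) (I * μ) +
        2 * Real.pi * I * -q * jacobiTheta₂ (p + I * -q * μ) (I * μ)))) * e4 +
    (1 / (1 / μ) ^ (1 / 2 : ℂ) * 
    cexp (-Real.pi * p ^ 2 * (1 / μ) + 2 * Real.pi * I * p * q) *
      cexp (-Real.pi * I * (q + I * p * (1 / μ)) ^ 2 / (I * (1 / μ)))) * e6

lemma theta_shift (p q ν : ℂ) : theta (p - 1) q ν = theta p q ν := by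
  unfold theta
  rw [← (Equiv.addRight (1 : ℤ)).tsum_eq]
  refine tsum_congr fun m => ?_
  have : (((Equiv.addRight (1 : ℤ)) m : ℤ) : ℂ) + (p - 1) = m + p := by
    simp only [Equiv.coe_addRight]; push_cast; ring
  rw [this]

lemma thetaQ_shift (p q ν : ℂ) : thetaQ (p - 1) q ν = thetaQ p q ν := by
  unfold thetaQ
  rw [← (Equiv.addRight (1 : ℤ)).tsum_eq]
  congr 1
  refine tsum_congr fun m => ?_
  have : (((Equiv.addRight (1 : ℤ)) m : ℤ) : ℂ) + (p - 1) = m + p := by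
    simp only [Equiv.coe_addRight]; push_cast; ring
  rw [this]

open Complex in
lemma w2_inv (p q μ : ℂ) (hμ : 0 < μ.re) : w2 p q (1 / μ) = μ ^ 2 * w2 (-q) p μ := by
  have h0 : μ ≠ 0 := by rintro rfl; simp at hμ
  unfold w2
  rw [theta_inv _ _ _ hμ, theta_inv _ _ _ hμ, theta_inv _ _ _ hμ, thetaQ_inv _ _ _ hμ]
  have a1 : theta (-(1 / 2)) 0 μ = theta (1 / 2) 0 μ := by
    rw [← theta_shift (1 / 2)]; norm_num
  have a2 : thetaQ (-(q + 1 / 2)) (p + 1 / 2) μ = thetaQ (-q + 1 / 2) (p + 1 / 2) μ := by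
    rw [← thetaQ_shift (-q + 1 / 2)]; congr 1; ring
  have a3 : theta (-0) (1 / 2) μ = theta 0 (1 / 2) μ := by rw [neg_zero]
  rw [a1, a2, a3]
  have hs : (1 / μ) ^ (1 / 2 : ℂ) * (1 / μ) ^ (1 / 2 : ℂ) = 1 / μ := by
    rw [← Complex.cpow_add _ _ (one_div_ne_zero h0)]; norm_num
  set s := (1 / μ) ^ (1 / 2 : ℂ) with hsdef
  have hs0 : s ≠ 0 := by
    intro h; rw [h] at hs; simp at hs; exact h0 hs.symm
  have hμs : μ = 1 / (s * s) := by rw [hs]; simp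
  have b1 : cexp (2 * Real.pi * I * (p + 1 / 2) * (q + 1 / 2)) =
      I * cexp (2 * Real.pi * I * p * q) * cexp (Real.pi * I * p) * cexp (Real.pi * I * q) := by
    have : I = cexp (Real.pi / 2 * I) := Complex.exp_pi_div_two_mul_I.symm
    conv_rhs => enter [1, 1, 1]; rw [this]
    rw [← Complex.exp_add, ← Complex.exp_add, ← Complex.exp_add]
    congr 1; ring
  have b2 : cexp (Real.pi * I * -q) = (cexp (Real.pi * I * q))⁻¹ := by
    rw [← Complex.exp_neg]; congr 1; ring
  rw [b1, b2]
  have c1 := Complex.exp_ne_zero (2 * Real.pi * I * p * q)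
  have c2 := Complex.exp_ne_zero (Real.pi * I * p)
  have c3 := Complex.exp_ne_zero (Real.pi * I * q)
  have d1 : cexp (2 * Real.pi * I * (1 / 2) * 0) = 1 := by simp
  have d2 : cexp (2 * Real.pi * I * 0 * (1 / 2)) = 1 := by simp
  rw [d1, d2]
  by_cases ht : theta (-q) p μ = 0
  · simp [ht]
  generalize theta (-q) p μ = t at *
  generalize cexp (2 * Real.pi * I * p * q) = A at *
  generalize cexp (Real.pi * I * p) = B at *
  generalize cexp (Real.pi * I * q) = C at *
  generalize thetaQ (-q + 1 / 2) (p + 1 / 2) μ = Q at *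
  generalize theta (1 / 2) 0 μ = t2 at *
  generalize theta 0 (1 / 2) μ = t4 at *
  have hs2 : s ^ 2 = 1 / μ := by rw [sq, hs]
  clear_value s
  clear hs hμs hsdef
  have key : ∀ X : ℂ, X / s ^ 2 = X * μ := by intro X; rw [hs2]; simp
  calc _ = (-I ^ 2) * (I / 2) * t2 * t4 * μ * Q * C / t / s ^ 2 := by field_simp
    _ = _ := by rw [key, I_sq]; field_simp

lemma step_aux {F R : ℂ → ℂ} {R' μ : ℂ} (hF : DifferentiableOn ℂ F {ν : ℂ | 0 < ν.re})
    (hFR : ∀ ν : ℂ, 0 < ν.re → F (1 / ν) = R ν) (hμ : 0 < μ.re) (hR : HasDerivAt R R' μ) :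
    deriv F (1 / μ) = -μ ^ 2 * R' := by
  have h0 : μ ≠ 0 := by rintro rfl; simp at hμ
  have hd : HasDerivAt F (deriv F (1 / μ)) (1 / μ) :=
    (hF.differentiableAt (isOpen_rhp.mem_nhds (inv_re_pos hμ))).hasDerivAt
  have hi : HasDerivAt (fun ν : ℂ => 1 / ν) (-(μ ^ 2)⁻¹) μ := by
    simpa only [one_div] using hasDerivAt_inv h0
  have hc : HasDerivAt (fun ν : ℂ => F (1 / ν)) (deriv F (1 / μ) * -(μ ^ 2)⁻¹) μ :=
    hd.comp μ hi
  have he : (fun ν : ℂ => F (1 / ν)) =ᶠ[nhds μ] R := by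
    filter_upwards [isOpen_rhp.mem_nhds hμ] with ν hν using hFR ν hν
  have := hc.unique (hR.congr_of_eventuallyEq he)
  rw [← this]
  field_simp

lemma iter_diff {F : ℂ → ℂ} (hF : DifferentiableOn ℂ F {ν : ℂ | 0 < ν.re}) (n : ℕ) :
    DifferentiableOn ℂ (iteratedDeriv n F) {ν : ℂ | 0 < ν.re} := by
  induction n with
  | zero => simpa [iteratedDeriv_zero] using hF
  | succ k ih => rw [iteratedDeriv_succ]; exact ih.deriv isOpen_rhp

lemma iter_hasDeriv {F : ℂ → ℂ} (hF : DifferentiableOn ℂ F {ν : ℂ | 0 < ν.re}) (n : ℕ)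
    {μ : ℂ} (hμ : 0 < μ.re) :
    HasDerivAt (iteratedDeriv n F) (iteratedDeriv (n + 1) F μ) μ := by
  rw [iteratedDeriv_succ]
  exact ((iter_diff hF n).differentiableAt (isOpen_rhp.mem_nhds hμ)).hasDerivAt

lemma mono_hasDeriv {F : ℂ → ℂ} (hF : DifferentiableOn ℂ F {ν : ℂ | 0 < ν.re}) (n k : ℕ) (c : ℂ)
    {μ : ℂ} (hμ : 0 < μ.re) :
    HasDerivAt (fun ν => c * ν ^ k * iteratedDeriv n F ν)
      (c * (k * μ ^ (k - 1)) * iteratedDeriv n F μ + c * μ ^ k * iteratedDeriv (n + 1) F μ) μ :=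
  ((hasDerivAt_pow k μ).const_mul c).mul (iter_hasDeriv hF n hμ)

/-- Lemma 5.7: behavior of `w₂[p,q]` and its μ-derivatives up to order 4 under
`iμ ↦ i/μ`, expressed through `w₂[−q,p]`. -/
theorem statement7 (p q μ : ℂ) (hμ : 0 < μ.re)
    (hθ : ∀ ν : ℂ, 0 < ν.re → theta p q ν ≠ 0) :
    w2 p q (1 / μ) = μ ^ 2 * w2 (-q) p μ ∧
    iteratedDeriv 1 (w2 p q) (1 / μ) =
        -μ ^ 4 * iteratedDeriv 1 (w2 (-q) p) μ - 2 * μ ^ 3 * w2 (-q) p μ ∧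
    iteratedDeriv 2 (w2 p q) (1 / μ) =
        μ ^ 6 * iteratedDeriv 2 (w2 (-q) p) μ + 6 * μ ^ 5 * iteratedDeriv 1 (w2 (-q) p) μ +
          6 * μ ^ 4 * w2 (-q) p μ ∧
    iteratedDeriv 3 (w2 p q) (1 / μ) =
        -μ ^ 8 * iteratedDeriv 3 (w2 (-q) p) μ - 12 * μ ^ 7 * iteratedDeriv 2 (w2 (-q) p) μ -
          36 * μ ^ 6 * iteratedDeriv 1 (w2 (-q) p) μ - 24 * μ ^ 5 * w2 (-q) p μ ∧
    iteratedDeriv 4 (w2 p q) (1 / μ) =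
        μ ^ 10 * iteratedDeriv 4 (w2 (-q) p) μ + 20 * μ ^ 9 * iteratedDeriv 3 (w2 (-q) p) μ +
          120 * μ ^ 8 * iteratedDeriv 2 (w2 (-q) p) μ +
          240 * μ ^ 7 * iteratedDeriv 1 (w2 (-q) p) μ + 120 * μ ^ 6 * w2 (-q) p μ := by
  have hθ' : ∀ ν : ℂ, 0 < ν.re → theta (-q) p ν ≠ 0 := by
    intro ν hν h
    apply hθ (1 / ν) (inv_re_pos hν)
    rw [theta_inv _ _ _ hν, h, mul_zero]
  have hf := w2_diff p q hθ
  have hg := w2_diff (-q) p hθ'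
  have m := fun n k c (ν : ℂ) (hν : 0 < ν.re) => mono_hasDeriv hg n k c hν
  have H0 : ∀ ν : ℂ, 0 < ν.re → iteratedDeriv 0 (w2 p q) (1 / ν) =
      1 * ν ^ 2 * iteratedDeriv 0 (w2 (-q) p) ν := by
    intro ν hν
    rw [iteratedDeriv_zero, iteratedDeriv_zero, w2_inv _ _ _ hν, one_mul]
  have H1 : ∀ ν : ℂ, 0 < ν.re → iteratedDeriv 1 (w2 p q) (1 / ν) =
      (-1) * ν ^ 4 * iteratedDeriv 1 (w2 (-q) p) ν +
      (-2) * ν ^ 3 * iteratedDeriv 0 (w2 (-q) p) ν := by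
    intro ν hν
    have := step_aux (iter_diff hf 0) H0 hν (m _ _ _ ν hν)
    rw [iteratedDeriv_succ, this]
    push_cast
    ring
  have H2 : ∀ ν : ℂ, 0 < ν.re → iteratedDeriv 2 (w2 p q) (1 / ν) =
      1 * ν ^ 6 * iteratedDeriv 2 (w2 (-q) p) ν +
      6 * ν ^ 5 * iteratedDeriv 1 (w2 (-q) p) ν +
      6 * ν ^ 4 * iteratedDeriv 0 (w2 (-q) p) ν := by
    intro ν hν
    have := step_aux (iter_diff hf 1) H1 hν ((m _ _ _ ν hν).add (m _ _ _ ν hν))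
    rw [iteratedDeriv_succ, this]
    push_cast
    ring
  have H3 : ∀ ν : ℂ, 0 < ν.re → iteratedDeriv 3 (w2 p q) (1 / ν) =
      (-1) * ν ^ 8 * iteratedDeriv 3 (w2 (-q) p) ν +
      (-12) * ν ^ 7 * iteratedDeriv 2 (w2 (-q) p) ν +
      (-36) * ν ^ 6 * iteratedDeriv 1 (w2 (-q) p) ν +
      (-24) * ν ^ 5 * iteratedDeriv 0 (w2 (-q) p) ν := by
    intro ν hν
    have := step_aux (iter_diff hf 2) H2 hν
      (((m _ _ _ ν hν).add (m _ _ _ ν hν)).add (m _ _ _ ν hν))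
    rw [iteratedDeriv_succ, this]
    push_cast
    ring
  have H4 : ∀ ν : ℂ, 0 < ν.re → iteratedDeriv 4 (w2 p q) (1 / ν) =
      1 * ν ^ 10 * iteratedDeriv 4 (w2 (-q) p) ν +
      20 * ν ^ 9 * iteratedDeriv 3 (w2 (-q) p) ν +
      120 * ν ^ 8 * iteratedDeriv 2 (w2 (-q) p) ν +
      240 * ν ^ 7 * iteratedDeriv 1 (w2 (-q) p) ν +
      120 * ν ^ 6 * iteratedDeriv 0 (w2 (-q) p) ν := by
    intro ν hν
    have := step_aux (iter_diff hf 3) H3 hν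
      ((((m _ _ _ ν hν).add (m _ _ _ ν hν)).add (m _ _ _ ν hν)).add (m _ _ _ ν hν))
    rw [iteratedDeriv_succ, this]
    push_cast
    ring
  refine ⟨w2_inv _ _ _ hμ, ?_, ?_, ?_, ?_⟩
  · rw [H1 μ hμ, iteratedDeriv_zero]; ring
  · rw [H2 μ hμ, iteratedDeriv_zero]; ring
  · rw [H3 μ hμ, iteratedDeriv_zero]; ring
  · rw [H4 μ hμ, iteratedDeriv_zero]; ring

end
end

section
/- Let p, q ∈ ℂ and μ ∈ ℂ with Re μ > 0, and assume ∂qθ[p,q](iν) ≠ 0 for every ν with Re ν > 0. Then: F[p,q](i/μ) = −μ^{−2} F[−q,p](iμ); F'[p,q](i/μ) = F'[−q,p](iμ) − 2μ^{−1} F[−q,p](iμ); F''[p,q](i/μ) = −μ² F''[−q,p](iμ) + 2μ F'[−q,p](iμ) − 2 F[−q,p](iμ); F⁽³⁾[p,q](i/μ) = μ⁴ F⁽³⁾[−q,p](iμ); F⁽⁴⁾[p,q](i/μ) = −μ⁶ F⁽⁴⁾[−q,p](iμ) − 4μ⁵ F⁽³⁾[−q,p](iμ). -/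
noncomputable section

open Complex in
lemma theta_eq_aux (p q μ : ℂ) :
    theta p q μ = cexp (-(Real.pi : ℂ) * p ^ 2 * μ + 2 * Real.pi * I * p * q) *
      jacobiTheta₂ (q + I * p * μ) (I * μ) := by
  unfold theta jacobiTheta₂ jacobiTheta₂_term
  rw [← tsum_mul_left]
  refine tsum_congr fun m => ?_
  rw [← Complex.exp_add]
  congr 1
  linear_combination (-2 * Real.pi * m * p * μ - Real.pi * m ^ 2 * μ : ℂ) * I_sq

open Complex in
lemma thetaQ_eq_aux (p q μ : ℂ) (hμ : 0 < μ.re) :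
    thetaQ p q μ = cexp (-(Real.pi : ℂ) * p ^ 2 * μ + 2 * Real.pi * I * p * q) *
      (jacobiTheta₂' (q + I * p * μ) (I * μ) +
        2 * Real.pi * I * p * jacobiTheta₂ (q + I * p * μ) (I * μ)) := by
  have him : 0 < (I * μ).im := by simpa using hμ
  have h1 := (summable_jacobiTheta₂_term_iff (q + I * p * μ) (I * μ)).2 him
  have h2 := (summable_jacobiTheta₂'_term_iff (q + I * p * μ) (I * μ)).2 him
  unfold thetaQ jacobiTheta₂' jacobiTheta₂
  rw [← tsum_mul_left, ← tsum_mul_left, ← h2.tsum_add (h1.mul_left _), ← tsum_mul_left]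
  refine tsum_congr fun m => ?_
  have : cexp (-(Real.pi : ℂ) * ((m : ℂ) + p) ^ 2 * μ + 2 * (Real.pi : ℂ) * I * ((m : ℂ) + p) * q)
      = cexp (-(Real.pi : ℂ) * p ^ 2 * μ + 2 * Real.pi * I * p * q) *
        jacobiTheta₂_term m (q + I * p * μ) (I * μ) := by
    unfold jacobiTheta₂_term
    rw [← Complex.exp_add]
    congr 1
    linear_combination (-2 * Real.pi * m * p * μ - Real.pi * m ^ 2 * μ : ℂ) * I_sq
  rw [this, jacobiTheta₂'_term]
  ring

open Complex in
lemma Ftwo_inv_aux (Λ p q μ : ℂ) (hμ : 0 < μ.re) :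
    Ftwo Λ p q (1 / μ) = -μ ^ (-2 : ℤ) * Ftwo Λ (-q) p μ := by
  have hμ0 : μ ≠ 0 := by rintro rfl; simp at hμ
  have hinv : 0 < (1 / μ).re := by
    rw [one_div, inv_re]; exact div_pos hμ (normSq_pos.2 hμ0)
  unfold Ftwo
  rw [theta_eq_aux, theta_eq_aux, thetaQ_eq_aux _ _ _ hinv, thetaQ_eq_aux _ _ _ hμ,
    mul_div_mul_left _ _ (exp_ne_zero _), mul_div_mul_left _ _ (exp_ne_zero _),
    jacobiTheta₂_functional_equation (q + I * p * (1 / μ)),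
    jacobiTheta₂'_functional_equation (q + I * p * (1 / μ))]
  have e1 : (q + I * p * (1 / μ)) / (I * (1 / μ)) = p + I * (-q) * μ := by
    field_simp
    linear_combination (q * μ) * I_sq
  have e2 : -1 / (I * (1 / μ)) = I * μ := by
    field_simp
    linear_combination -I_sq
  rw [e1, e2]
  set A := 1 / (-I * (I * (1 / μ))) ^ (1 / 2 : ℂ) *
    cexp (-Real.pi * I * (q + I * p * (1 / μ)) ^ 2 / (I * (1 / μ))) with hA
  have hA0 : A ≠ 0 := by
    have : -I * (I * (1 / μ)) ≠ 0 := by simp [hμ0]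
    rw [hA]
    refine mul_ne_zero (one_div_ne_zero ?_) (exp_ne_zero _)
    rw [cpow_def_of_ne_zero this]
    exact exp_ne_zero _
  set K := jacobiTheta₂ (p + I * (-q) * μ) (I * μ)
  set K' := jacobiTheta₂' (p + I * (-q) * μ) (I * μ)
  have e3 : A / (I * (1 / μ)) * (K' - 2 * Real.pi * I * (q + I * p * (1 / μ)) * K) +
      2 * Real.pi * I * p * (A * K) =
      A * ((-I * μ) * (K' + 2 * Real.pi * I * (-q) * K)) := by
    have : A / (I * (1 / μ)) = A * (-I * μ) := by
      field_simp
      linear_combination I_sq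
    rw [this]
    field_simp
    linear_combination (2 * Real.pi * p * K : ℂ) * I_sq
  rw [e3, mul_div_mul_left _ _ hA0]
  rw [div_pow, div_pow, mul_pow, mul_pow, neg_sq, I_sq, zpow_neg]
  rw [show μ ^ (2 : ℤ) = μ ^ 2 from by norm_cast]
  simp only [div_eq_mul_inv, mul_inv]
  ring

open Complex in
lemma differentiableAt_theta_aux (p q μ : ℂ) (hμ : 0 < μ.re) :
    DifferentiableAt ℂ (theta p q) μ := by
  have him : 0 < (I * μ).im := by simpa using hμ
  rw [show theta p q = fun μ => _ from funext fun μ => theta_eq_aux p q μ]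
  have h := (hasFDerivAt_jacobiTheta₂ (q + I * p * μ) him).differentiableAt
  have h2 : DifferentiableAt ℂ (fun ν : ℂ => (q + I * p * ν, I * ν)) μ := by fun_prop
  have h3 := DifferentiableAt.comp μ h h2
  refine DifferentiableAt.mul (by fun_prop) h3

open Complex in
lemma differentiableAt_thetaQ_aux (p q μ : ℂ) (hμ : 0 < μ.re) :
    DifferentiableAt ℂ (thetaQ p q) μ := by
  have him : 0 < (I * μ).im := by simpa using hμ
  have hopen : IsOpen {ν : ℂ | 0 < ν.re} := isOpen_lt continuous_const continuous_re
  have hev : thetaQ p q =ᶠ[nhds μ] fun μ =>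
      cexp (-(Real.pi : ℂ) * p ^ 2 * μ + 2 * Real.pi * I * p * q) *
      (jacobiTheta₂' (q + I * p * μ) (I * μ) +
        2 * Real.pi * I * p * jacobiTheta₂ (q + I * p * μ) (I * μ)) := by
    filter_upwards [hopen.mem_nhds hμ] with ν hν using thetaQ_eq_aux p q ν hν
  rw [hev.differentiableAt_iff]
  have h := (hasFDerivAt_jacobiTheta₂ (q + I * p * μ) him).differentiableAt
  have h2 : DifferentiableAt ℂ (fun ν : ℂ => (q + I * p * ν, I * ν)) μ := by fun_prop
  have h3 := DifferentiableAt.comp μ h h2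
  refine DifferentiableAt.mul (by fun_prop) (DifferentiableAt.add ?_ (h3.const_mul _))
  let U : Set ℂ := {ν : ℂ | μ.re / 2 < ν.re} ∩ {ν : ℂ | ‖ν‖ < ‖μ‖ + 1}
  have hU : IsOpen U := (isOpen_lt continuous_const continuous_re).inter
    (isOpen_lt continuous_norm continuous_const)
  have hμU : μ ∈ U := ⟨by simp only [Set.mem_setOf_eq]; linarith, by simp⟩
  have hT : 0 < μ.re / 2 := by linarith
  let S : ℝ := ‖q‖ + ‖p‖ * (‖μ‖ + 1)
  have hsum := (summable_pow_mul_jacobiTheta₂_term_bound S hT 1).mul_left (2 * Real.pi)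
  refine (differentiableOn_tsum_of_summable_norm hsum
    (F := fun n ν => jacobiTheta₂'_term n (q + I * p * ν) (I * ν)) (U := U)
    (fun n => ?_) hU (fun n ν hν => ?_)).differentiableAt (hU.mem_nhds hμU)
  · unfold jacobiTheta₂'_term jacobiTheta₂_term
    fun_prop
  · have hz : |(q + I * p * ν).im| ≤ S := by
      refine (abs_im_le_norm _).trans ((norm_add_le _ _).trans ?_)
      simp only [norm_mul, norm_I, one_mul, S]
      gcongr
      exact le_of_lt hν.2
    refine (norm_jacobiTheta₂'_term_le hT hz (by simpa using le_of_lt hν.1) n).trans (le_of_eq ?_)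
    simp only [pow_one]
    push_cast
    ring

lemma deriv_eq_aux {f g : ℂ → ℂ} {μ g' : ℂ} (hμ : 0 < μ.re)
    (hfg : ∀ ν : ℂ, 0 < ν.re → f ν = g ν) (hg : HasDerivAt g g' μ) : deriv f μ = g' := by
  have hopen : IsOpen {ν : ℂ | 0 < ν.re} := isOpen_lt continuous_const Complex.continuous_re
  have hev : f =ᶠ[nhds μ] g := by
    filter_upwards [hopen.mem_nhds hμ] with ν hν using hfg ν hν
  rw [hev.deriv_eq, hg.deriv]

lemma derivs_aux (G H : ℂ → ℂ) (hG : ∀ ν : ℂ, 0 < ν.re → DifferentiableAt ℂ G ν)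
    (hH : ∀ ν : ℂ, 0 < ν.re → H ν = -ν ^ 2 * G ν⁻¹) :
    ∀ ν : ℂ, 0 < ν.re →
    iteratedDeriv 1 H ν = -2 * ν * G ν⁻¹ + iteratedDeriv 1 G ν⁻¹ ∧
    iteratedDeriv 2 H ν = -2 * G ν⁻¹ + 2 * ν⁻¹ * iteratedDeriv 1 G ν⁻¹
      - (ν⁻¹) ^ 2 * iteratedDeriv 2 G ν⁻¹ ∧
    iteratedDeriv 3 H ν = (ν⁻¹) ^ 4 * iteratedDeriv 3 G ν⁻¹ ∧
    iteratedDeriv 4 H ν = -4 * (ν⁻¹) ^ 5 * iteratedDeriv 3 G ν⁻¹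
      - (ν⁻¹) ^ 6 * iteratedDeriv 4 G ν⁻¹ := by
  have hopen : IsOpen {ν : ℂ | 0 < ν.re} := isOpen_lt continuous_const Complex.continuous_re
  have hne : ∀ ν : ℂ, 0 < ν.re → ν ≠ 0 := by rintro ν h rfl; simp at h
  have hinv : ∀ ν : ℂ, 0 < ν.re → 0 < (ν⁻¹).re := fun ν h => by
    rw [Complex.inv_re]; exact div_pos h (Complex.normSq_pos.2 (hne ν h))
  have hD : ∀ n : ℕ, DifferentiableOn ℂ (iteratedDeriv n G) {ν : ℂ | 0 < ν.re} := by
    intro n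
    induction n with
    | zero => rw [iteratedDeriv_zero]; exact fun ν h => (hG ν h).differentiableWithinAt
    | succ n ih => rw [iteratedDeriv_succ]; exact ih.deriv hopen
  have hc : ∀ n : ℕ, ∀ ν : ℂ, 0 < ν.re → HasDerivAt (fun x => iteratedDeriv n G x⁻¹)
      (-(iteratedDeriv (n + 1) G ν⁻¹ * (ν⁻¹) ^ 2)) ν := by
    intro n ν h
    have h1 := ((hD n).differentiableAt (hopen.mem_nhds (hinv ν h))).hasDerivAt
    rw [← iteratedDeriv_succ] at h1
    have h2 := h1.comp ν (hasDerivAt_inv (hne ν h))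
    convert! h2 using 1
    rw [inv_pow]; ring
  have hi : ∀ ν : ℂ, 0 < ν.re → HasDerivAt (fun x : ℂ => x⁻¹) (-(ν⁻¹) ^ 2) ν := by
    intro ν h
    convert! hasDerivAt_inv (hne ν h) using 1
    rw [inv_pow]
  have h1 : ∀ ν : ℂ, 0 < ν.re →
      iteratedDeriv 1 H ν = -2 * ν * G ν⁻¹ + iteratedDeriv 1 G ν⁻¹ := by
    intro ν h
    rw [iteratedDeriv_succ, iteratedDeriv_zero]
    refine deriv_eq_aux h hH ?_
    have h0 := hc 0 ν h
    rw [iteratedDeriv_zero] at h0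
    convert! (((hasDerivAt_id ν).pow 2).neg).mul h0 using 1
    have := hne ν h
    simp
    field_simp
  have h2 : ∀ ν : ℂ, 0 < ν.re → iteratedDeriv 2 H ν = -2 * G ν⁻¹ + 2 * ν⁻¹ * iteratedDeriv 1 G ν⁻¹
      - (ν⁻¹) ^ 2 * iteratedDeriv 2 G ν⁻¹ := by
    intro ν h
    rw [iteratedDeriv_succ]
    refine deriv_eq_aux h h1 ?_
    have h0 := hc 0 ν h
    rw [iteratedDeriv_zero] at h0
    convert! (((hasDerivAt_id ν).const_mul (-2)).mul h0).add (hc 1 ν h) using 1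
    have := hne ν h
    simp
    field_simp
    ring
  have h3 : ∀ ν : ℂ, 0 < ν.re → iteratedDeriv 3 H ν = (ν⁻¹) ^ 4 * iteratedDeriv 3 G ν⁻¹ := by
    intro ν h
    rw [iteratedDeriv_succ]
    refine deriv_eq_aux h h2 ?_
    have h0 := hc 0 ν h
    rw [iteratedDeriv_zero] at h0
    convert! ((h0.const_mul (-2)).add (((hi ν h).const_mul 2).mul (hc 1 ν h))).sub
      (((hi ν h).pow 2).mul (hc 2 ν h)) using 1
    simp
    ring
  refine fun ν h => ⟨h1 ν h, h2 ν h, h3 ν h, ?_⟩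
  rw [iteratedDeriv_succ]
  refine deriv_eq_aux h h3 ?_
  convert! ((hi ν h).pow 4).mul (hc 3 ν h) using 1
  simp
  ring

/-- Lemma 5.10: behavior of `F[p,q]` and its μ-derivatives up to order 4 under
`iμ ↦ i/μ`, expressed through `F[−q,p]`. -/
theorem statement10 (Λ : ℂ) (hΛ : Λ ≠ 0) (p q μ : ℂ) (hμ : 0 < μ.re)
    (hθ : ∀ ν : ℂ, 0 < ν.re → thetaQ p q ν ≠ 0) :
    Ftwo Λ p q (1 / μ) = -μ ^ (-2 : ℤ) * Ftwo Λ (-q) p μ ∧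
    iteratedDeriv 1 (Ftwo Λ p q) (1 / μ) =
        iteratedDeriv 1 (Ftwo Λ (-q) p) μ - 2 * μ ^ (-1 : ℤ) * Ftwo Λ (-q) p μ ∧
    iteratedDeriv 2 (Ftwo Λ p q) (1 / μ) =
        -μ ^ 2 * iteratedDeriv 2 (Ftwo Λ (-q) p) μ + 2 * μ * iteratedDeriv 1 (Ftwo Λ (-q) p) μ -
          2 * Ftwo Λ (-q) p μ ∧
    iteratedDeriv 3 (Ftwo Λ p q) (1 / μ) = μ ^ 4 * iteratedDeriv 3 (Ftwo Λ (-q) p) μ ∧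
    iteratedDeriv 4 (Ftwo Λ p q) (1 / μ) =
        -μ ^ 6 * iteratedDeriv 4 (Ftwo Λ (-q) p) μ -
          4 * μ ^ 5 * iteratedDeriv 3 (Ftwo Λ (-q) p) μ := by
  have hμ0 : μ ≠ 0 := by rintro rfl; simp at hμ
  have hG : ∀ ν : ℂ, 0 < ν.re → DifferentiableAt ℂ (Ftwo Λ p q) ν := by
    intro ν h
    unfold Ftwo
    exact (((differentiableAt_theta_aux p q ν h).div (differentiableAt_thetaQ_aux p q ν h)
      (hθ ν h)).pow 2).const_mul _
  have hH : ∀ ν : ℂ, 0 < ν.re → Ftwo Λ (-q) p ν = -ν ^ 2 * Ftwo Λ p q ν⁻¹ := by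
    intro ν h
    have h0 : ν ≠ 0 := by rintro rfl; simp at h
    have := Ftwo_inv_aux Λ p q ν h
    rw [one_div] at this
    rw [this, zpow_neg, show ν ^ (2 : ℤ) = ν ^ 2 from by norm_cast]
    field_simp
  obtain ⟨h1, h2, h3, h4⟩ := derivs_aux _ _ hG hH μ hμ
  refine ⟨Ftwo_inv_aux Λ p q μ hμ, ?_, ?_, ?_, ?_⟩
  · rw [h1, hH μ hμ, one_div, zpow_neg_one]
    field_simp
    ring
  · rw [h2, h1, hH μ hμ, one_div]
    field_simp
    ring
  · rw [h3, one_div]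
    field_simp
  · rw [h4, h3, one_div]
    field_simp
    ring

end
end
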